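/- Let H be a complex Hilbert space, let A be a JC-algebra on H, and let J = {a ∈ A : b·a·c + c*·a·b* ∈ A for all b, c ∈ C*(A)}. Then J is reversible: for all a₁, a₂, …, aₙ ∈ J one has a₁a₂⋯aₙ + aₙaₙ₋₁⋯a₁ ∈ J. -/

import Mathlib

variable {H : Type*} [NormedAddCommGroup H] [InnerProductSpace ℂ H] [CompleteSpace H]

/-- A JC-algebra on a complex Hilbert space `H`: a norm-closed real-linear subspace of the
self-adjoint bounded operators on `H`, closed under the Jordan product `(a*b + b*a)/2`. -/
def IsJCAlgebra (A : Set (H →L[ℂ] H)) : Prop :=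
  IsClosed A ∧
  (0 : H →L[ℂ] H) ∈ A ∧
  (∀ a ∈ A, ∀ b ∈ A, a + b ∈ A) ∧
  (∀ (r : ℝ), ∀ a ∈ A, r • a ∈ A) ∧
  (∀ a ∈ A, IsSelfAdjoint a) ∧
  (∀ a ∈ A, ∀ b ∈ A, (2⁻¹ : ℝ) • (a * b + b * a) ∈ A)

/-- `C*(A)`: the smallest norm-closed complex (non-unital) `*`-subalgebra of `B(H)`
containing `A`. -/
noncomputable def Cstar (A : Set (H →L[ℂ] H)) : Set (H →L[ℂ] H) :=
  closure (NonUnitalStarAlgebra.adjoin ℂ A : Set (H →L[ℂ] H))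

/-- The set `J = {a ∈ A : b·a·c + c*·a·b* ∈ A for all b, c ∈ C*(A)}`. -/
noncomputable def Jset (A : Set (H →L[ℂ] H)) : Set (H →L[ℂ] H) :=
  {a | a ∈ A ∧ ∀ b ∈ Cstar A, ∀ c ∈ Cstar A, b * a * c + star c * a * star b ∈ A}

/-- A set `S` of operators is reversible if `a₁a₂⋯aₙ + aₙaₙ₋₁⋯a₁ ∈ S` for all
`a₁, …, aₙ ∈ S`. -/
def IsReversible (S : Set (H →L[ℂ] H)) : Prop :=
  ∀ l : List (H →L[ℂ] H), l ≠ [] → (∀ x ∈ l, x ∈ S) → l.prod + l.reverse.prod ∈ S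

/-!
Write `p` for the product of a list of elements of `J`. Self-adjointness identifies the reversed
product with `star p`. Absorbing all factors but the first into the right-hand factor `c ∈ C*(A)`
gives `b * p * c + star (b * p * c) ∈ A`; summing this for a list and its reverse yields the
sandwich condition for `p + star p`. For `p + star p ∈ A` itself, where no outer factors are
available, lists of length at most two need only the Jordan structure of `A`.
-/

section Monoid

variable {M : Type*} [Monoid M]

theorem star_list_prod_eq_prod_reverse [StarMul M] {l : List M}
    (hl : ∀ x ∈ l, IsSelfAdjoint x) : star l.prod = l.reverse.prod := by
  have hmap : l.map star = l := (List.map_congr_left fun x hx => (hl x hx).star_eq).trans l.map_id'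
  calc star l.prod = (l.map star).reverse.prod := unop_map_list_prod (starMulEquiv (R := M)) l
    _ = l.reverse.prod := by rw [hmap]

theorem list_prod_mem_of_ne_nil {C : Subsemigroup M} {l : List M} (hne : l ≠ [])
    (hl : ∀ x ∈ l, x ∈ C) : l.prod ∈ C :=
  List.prod_induction_nonempty (· ∈ C) (fun _ _ => mul_mem) hne hl

end Monoid

/-- The set of `a ∈ A` with `b * a * c + star c * a * star b ∈ A` for all `b, c ∈ C`. For a
JC-algebra `A` and `C = C*(A)` it is the paper's `J`. -/
def sandwichCore {R : Type*} [Add R] [Mul R] [Star R] (A C : Set R) : Set R :=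
  {a | a ∈ A ∧ ∀ b ∈ C, ∀ c ∈ C, b * a * c + star c * a * star b ∈ A}

section StarRing

variable {R : Type*} [Semiring R] [StarRing R]

theorem add_star_mem_of_mem_sandwichCore {A C : Set R} (hsa : ∀ a ∈ A, IsSelfAdjoint a)
    {a b c : R} (ha : a ∈ sandwichCore A C) (hb : b ∈ C) (hc : c ∈ C) :
    b * a * c + star (b * a * c) ∈ A := by
  rw [star_mul, star_mul, (hsa a ha.1).star_eq, ← mul_assoc]
  exact ha.2 b hb c hc

theorem add_star_sandwich_list_prod_mem {A : Set R} {C : Subsemigroup R} (hAC : A ⊆ C)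
    (hsa : ∀ a ∈ A, IsSelfAdjoint a) {l : List R} (hne : l ≠ [])
    (hl : ∀ x ∈ l, x ∈ sandwichCore A C) {b c : R} (hb : b ∈ C) (hc : c ∈ C) :
    b * l.prod * c + star (b * l.prod * c) ∈ A := by
  obtain ⟨a, t, rfl⟩ := List.exists_cons_of_ne_nil hne
  rw [List.forall_mem_cons] at hl
  have htc : (t ++ [c]).prod ∈ C := list_prod_mem_of_ne_nil (by simp) <|
    List.forall_mem_append.2 ⟨fun x hx => hAC (hl.2 x hx).1, by simpa using hc⟩
  simpa only [List.prod_cons, List.prod_append, List.prod_nil, mul_one, mul_assoc] using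
    add_star_mem_of_mem_sandwichCore hsa hl.1 hb htc

variable {A : AddSubsemigroup R} {C : Subsemigroup R}

theorem list_prod_add_star_mem (hAC : (A : Set R) ⊆ C) (hsa : ∀ a ∈ A, IsSelfAdjoint a)
    (hanti : ∀ a ∈ A, ∀ b ∈ A, a * b + b * a ∈ A) {l : List R} (hne : l ≠ [])
    (hl : ∀ x ∈ l, x ∈ sandwichCore (A : Set R) C) : l.prod + star l.prod ∈ A := by
  match l, hne, hl with
  | [a], _, hl =>
    have ha : a ∈ A := (hl a (by simp)).1
    simpa [(hsa a ha).star_eq] using add_mem ha ha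
  | [a, b], _, hl =>
    have ha : a ∈ A := (hl a (by simp)).1
    have hb : b ∈ A := (hl b (by simp)).1
    simpa [(hsa a ha).star_eq, (hsa b hb).star_eq] using hanti a ha b hb
  | a :: b :: c :: t, _, hl =>
    -- With at least three factors, the second one is sandwiched between elements of `C`.
    have hlC : ∀ x ∈ a :: b :: c :: t, x ∈ C := fun x hx => hAC (hl x hx).1
    have hct : (c :: t).prod ∈ C :=
      list_prod_mem_of_ne_nil (List.cons_ne_nil c t) fun x hx => hlC x (by simp_all)
    rw [List.prod_cons, List.prod_cons, ← mul_assoc]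
    exact add_star_mem_of_mem_sandwichCore hsa (hl b (by simp)) (hlC a (by simp)) hct

theorem jset_reversible_general (hAC : (A : Set R) ⊆ C) (hsa : ∀ a ∈ A, IsSelfAdjoint a)
    (hanti : ∀ a ∈ A, ∀ b ∈ A, a * b + b * a ∈ A) {l : List R} (hne : l ≠ [])
    (hl : ∀ x ∈ l, x ∈ sandwichCore (A : Set R) C) :
    l.prod + l.reverse.prod ∈ sandwichCore (A : Set R) C := by
  have hstar : star l.prod = l.reverse.prod :=
    star_list_prod_eq_prod_reverse fun x hx => hsa x (hl x hx).1
  refine ⟨hstar ▸ list_prod_add_star_mem hAC hsa hanti hne hl, fun b hb c hc => ?_⟩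
  have hfwd : b * l.prod * c + star (b * l.prod * c) ∈ A :=
    add_star_sandwich_list_prod_mem hAC hsa hne hl hb hc
  have hrev : b * l.reverse.prod * c + star (b * l.reverse.prod * c) ∈ A :=
    add_star_sandwich_list_prod_mem hAC hsa (by simpa using hne) (by simpa using hl) hb hc
  have hsum : b * (l.prod + l.reverse.prod) * c + star c * (l.prod + l.reverse.prod) * star b =
      b * l.prod * c + star (b * l.prod * c) +
        (b * l.reverse.prod * c + star (b * l.reverse.prod * c)) := by
    simp only [← hstar, star_mul, star_star, mul_add, add_mul, mul_assoc]
    abel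
  exact hsum ▸ add_mem hfwd hrev

end StarRing

theorem IsJCAlgebra.mul_add_mul_mem {A : Set (H →L[ℂ] H)} (hA : IsJCAlgebra A)
    {a b : H →L[ℂ] H} (ha : a ∈ A) (hb : b ∈ A) : a * b + b * a ∈ A := by
  obtain ⟨-, -, -, hsmul, -, hjordan⟩ := hA
  simpa only [smul_inv_smul₀ (two_ne_zero' ℝ)] using hsmul 2 _ (hjordan a ha b hb)

/-- The additive semigroup underlying a JC-algebra. -/
def IsJCAlgebra.toAddSubsemigroup {A : Set (H →L[ℂ] H)} (hA : IsJCAlgebra A) :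
    AddSubsemigroup (H →L[ℂ] H) where
  carrier := A
  add_mem' := fun ha hb => hA.2.2.1 _ ha _ hb

/-- `C*(A)` as a multiplicative semigroup. -/
noncomputable def cstarSubsemigroup (A : Set (H →L[ℂ] H)) : Subsemigroup (H →L[ℂ] H) where
  carrier := Cstar A
  mul_mem' := (NonUnitalStarAlgebra.adjoin ℂ A).topologicalClosure.mul_mem'

theorem subset_cstar (A : Set (H →L[ℂ] H)) : A ⊆ Cstar A :=
  (NonUnitalStarAlgebra.subset_adjoin ℂ A).trans subset_closure

/-- `J` is reversible. -/
theorem jset_reversible (A : Set (H →L[ℂ] H)) (hA : IsJCAlgebra A) :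
    IsReversible (Jset A) := fun _ hne hl =>
  jset_reversible_general (A := hA.toAddSubsemigroup) (C := cstarSubsemigroup A)
    (subset_cstar A) hA.2.2.2.2.1 (fun _ ha _ hb => hA.mul_add_mul_mem ha hb) hne hl
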